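/- Let I and L be positive integers, and for each i ∈ Fin I let p i : Fin L → ℝ≥0 be nonincreasing. Define the weight of a tuple u : Fin I → Fin L by W(u) = ∏_{i} p i (u i). Assume W is injective (no two distinct tuples have equal weight), and let e : Fin (L^I) ≃ (Fin I → Fin L) be an equivalence enumerating all tuples in strictly decreasing order of weight, i.e., m < n implies W(e m) > W(e n). Then for every n ∈ Fin (L^I) such that e n is not the all-zero tuple, there exist m ∈ Fin (L^I) with m < n and a coordinate i ∈ Fin I such that e n is the increment of e m at coordinate i (i.e., (e n) i = (e m) i + 1 and (e n) j = (e m) j for all j ≠ i). (Lemma 1 of the paper: the n-th most likely choice can always be generated from one of the top-(n−1) candidates with only one of its segments changing its non-zero position into the next maximum-probability position.) -/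

import Mathlib

open scoped NNReal

/-!
The argument is order-theoretic. In the product order on tuples the weight is antitone, so an
enumeration that strictly decreases in weight lists smaller tuples first. A tuple that is not
minimal covers some smaller tuple, and in a product of copies of `Fin L` the covering pairs
`u ⋖ v` are exactly those where `v` is the increment of `u` at a coordinate.
-/

section Enumeration

variable {ι X β : Type*} [LinearOrder ι] [PartialOrder X] [Preorder β] {W : X → β} {e : ι → X}

theorem lt_of_apply_lt_of_strictAnti_comp (hW : Antitone W) (he : StrictAnti (W ∘ e)) {m n : ι}
    (h : e m < e n) : m < n := by
  have hle : m ≤ n := he.le_iff_ge.1 (hW h.le)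
  exact hle.lt_of_ne fun hmn => h.ne (congrArg e hmn)

theorem stmt_4_general [IsStronglyCoatomic X] (hW : Antitone W) (he_surj : e.Surjective)
    (he : StrictAnti (W ∘ e)) {n : ι} (hn : ¬ IsMin (e n)) : ∃ m < n, e m ⋖ e n := by
  obtain ⟨a, ha⟩ := not_isMin_iff.1 hn
  obtain ⟨b, -, hb⟩ := exists_le_covBy_of_lt ha
  obtain ⟨m, rfl⟩ := he_surj b
  exact ⟨m, lt_of_apply_lt_of_strictAnti_comp hW he hb.lt, hb⟩

end Enumeration

section Tuples

variable {κ : Type*}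

theorem antitone_prod_apply {α : κ → Type*} [∀ k, Preorder (α k)] {M : Type*} [CommMonoid M]
    [Preorder M] [MulLeftMono M] {p : ∀ k, α k → M} (hp : ∀ k, Antitone (p k)) (s : Finset κ) :
    Antitone fun u : ∀ k, α k => ∏ k ∈ s, p k (u k) :=
  fun _ _ huv => Finset.prod_le_prod' fun k _ => hp k (huv k)

theorem pi_fin_covBy_iff {N : κ → ℕ} {u v : ∀ k, Fin (N k)} :
    u ⋖ v ↔ ∃ i, (v i : ℕ) = u i + 1 ∧ ∀ j, j ≠ i → v j = u j := by
  simp only [Pi.covBy_iff, Fin.covBy_iff, Nat.covBy_iff_add_one_eq, eq_comm]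

theorem not_isMin_of_ne_zero {L : ℕ} (hL : 0 < L) {u : κ → Fin L} (hu : u ≠ fun _ => ⟨0, hL⟩) :
    ¬ IsMin u :=
  fun hmin => hu (hmin.eq_of_ge fun _ => Nat.zero_le _)

end Tuples

/-- Lemma 1 of the paper: if `e` enumerates all tuples in strictly
decreasing order of weight (weights being pairwise distinct), then every non-top
candidate `e n` is the increment at one coordinate of some earlier candidate `e m`, `m < n`. -/
theorem stmt_4 (I L : ℕ) (hI : 1 ≤ I) (hL : 1 ≤ L)
    (p : Fin I → Fin L → ℝ≥0) (hp : ∀ i, Antitone (p i))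
    (hW : Function.Injective (fun u : Fin I → Fin L => ∏ i, p i (u i)))
    (e : Fin (L ^ I) ≃ (Fin I → Fin L))
    (he : ∀ m n : Fin (L ^ I), m < n → (∏ i, p i (e n i)) < ∏ i, p i (e m i))
    (n : Fin (L ^ I)) (hn : e n ≠ fun _ => (⟨0, hL⟩ : Fin L)) :
    ∃ m : Fin (L ^ I), m < n ∧ ∃ i : Fin I,
      ((e n) i : ℕ) = ((e m) i : ℕ) + 1 ∧ ∀ j, j ≠ i → e n j = e m j := by
  obtain ⟨m, hmn, hcov⟩ := stmt_4_general (antitone_prod_apply hp Finset.univ) e.surjective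
    (fun _ _ => he _ _) (not_isMin_of_ne_zero hL hn)
  exact ⟨m, hmn, pi_fin_covBy_iff.1 hcov⟩
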